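/- The central product Sp(2)·Sp(1), embedded in O(8) ≅ O(ℍ²) by letting [A,q] act on x ∈ ℍ² as x ↦ A·x·q̄, is the maximal subgroup of O(8) under which the quaternionic Hopf fibration h_ℍ : S⁷ → S⁴ is equivariant; the corresponding action on S⁴ ≅ S(ℝ⁵) is through the composite Sp(2)·Sp(1) ≅ Spin(5)·Spin(3) ↠ SO(5). Moreover h_ℍ admits the coset presentation: under the identifications S⁷ ≅ Sp(2)/Sp(1) (with Sp(1) included as diag(q,1)) and S⁴ ≅ Sp(2)/(Sp(1)×Sp(1)) (with Sp(1)×Sp(1) included diagonally as block matrices), h_ℍ is the canonical projection Sp(2)/Sp(1) → Sp(2)/(Sp(1)×Sp(1)). -/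

import Mathlib

/-!
The Hopf map is given in coordinates by `x ↦ (|x₀|² - |x₁|², 2 x₀ x̄₁) ∈ ℝ ⊕ ℍ`. It is constant
exactly on the quaternionic lines of `S⁷` and maps onto `S⁴`, which identifies `ℍP¹` with `S⁴`
by compactness.

Maximality: a line-preserving isometry `g` of `ℍ²` sends the standard frame to an orthonormal
frame `u`, `v`. Comparing the images of the lines through `(1,0)`, `(0,1)`, `(1,1)` and `(1,a)`
shows that `g(a,b) = u σ(a) + v σ(b)` for a single algebra endomorphism `σ` of `ℍ`, and `σ` is
inner by an averaging argument (`exists_conj_of_mul`). This gives `exists_matrix_of_lines`.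

Action through `SO(5)`: the right factor `q̄` does not affect the Hopf map, and every element of
`Sp(2)` factors as diagonal, real rotation, diagonal (`exists_decomp`). Each factor acts linearly
and isometrically on `ℝ ⊕ ℍ`, and each is a square of a matrix of the same kind, so its
determinant `±1` is squared to `1` (`rotatesS4_of_sq`).

Coset presentation: the second column is a surjection from the compact group `Sp(2)` to `S⁷`.
Two matrices whose second columns agree up to a right scalar `c` differ by a factor `diag(q, c)`
(`eq_mul_diag_of_col`), so the induced maps on coset spaces are continuous bijections from
compact spaces to Hausdorff ones.
-/

/-!
Statement 9 (FSS, Prop. 2.22 / Prop. 2.24): the central product `Sp(2)·Sp(1)`, acting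
on `ℍ²` by `[A,q] : x ↦ A·x·q̄`, is the maximal subgroup of `O(8) ≅ O(ℍ²)` under which
the quaternionic Hopf fibration `h_ℍ : S⁷ → S⁴` (sending a unit vector `(q₁,q₂) ∈ ℍ²`
to the quaternionic line `[q₁:q₂]`) is equivariant; the corresponding action on
`S⁴ ≅ S(ℝ⁵)` is through `Sp(2)·Sp(1) ≅ Spin(5)·Spin(3) ↠ SO(5)`; and `h_ℍ` admits the
coset presentation `Sp(2)/Sp(1) → Sp(2)/(Sp(1)×Sp(1))`.

Here everything is modelled concretely: `ℍ² = PiLp 2 (Fin 2 → ℍ)` with its Euclidean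
(`ℝ⁸`) structure, `O(8)` as the group of `ℝ`-linear isometric self-equivalences,
`h_ℍ`-equivariance of `g` as preservation of the partition of `ℍ²` into quaternionic
(right-scalar) lines, `Sp(2)` as the quaternion-unitary `2×2`-matrices and `Sp(1)` as
the unit quaternions.
-/

noncomputable section

open scoped Quaternion

/-- quaternionic 2-space `ℍ²` with its Euclidean (`ℓ²`) structure, underlying `ℝ⁸` -/
abbrev QuatPair : Type := PiLp 2 (fun _ : Fin 2 => ℍ[ℝ])

/-- `x` and `y` lie on a common quaternionic line: `y = x·c` for a nonzero quaternion
`c` (acting by right scalar multiplication).  Preservation of this relation is exactly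
equivariance over the quaternionic Hopf fibration `h_ℍ`. -/
def SameQuatLine (x y : QuatPair) : Prop :=
  ∃ c : ℍ[ℝ], c ≠ 0 ∧ ∀ i, y i = x i * c

/-- the 7-sphere `S(ℍ²)` -/
abbrev QuatSphere : Type := ↥(Metric.sphere (0 : QuatPair) 1)

/-- the 4-sphere `S⁴ ≅ ℍP¹`, as the quotient of `S⁷ = S(ℍ²)` by the fibers of the
quaternionic Hopf fibration `h_ℍ : (q₁,q₂) ↦ [q₁:q₂]` -/
abbrev QuatProjLine : Type :=
  Quot fun x y : QuatSphere => SameQuatLine x.1 y.1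

/-- the quaternionic Hopf fibration `h_ℍ : S⁷ → S⁴ = ℍP¹` -/
def quatHopf : QuatSphere → QuatProjLine := Quot.mk _

/-- `Sp(2)`: quaternion-unitary `2×2`-matrices -/
abbrev Sp2 : Type :=
  {A : Matrix (Fin 2) (Fin 2) ℍ[ℝ] // A ∈ unitary (Matrix (Fin 2) (Fin 2) ℍ[ℝ])}

/-- the right coset relation on `Sp(2)` for the subgroup `Sp(1)` included as
`q ↦ diag(q,1)`; its quotient is `Sp(2)/Sp(1) ≅ S⁷` -/
def sp1CosetRel (A B : Sp2) : Prop :=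
  ∃ q : ℍ[ℝ], ‖q‖ = 1 ∧ B.1 = A.1 * Matrix.diagonal ![q, 1]

/-- the right coset relation on `Sp(2)` for the block subgroup `Sp(1)×Sp(1)`;
its quotient is `Sp(2)/(Sp(1)×Sp(1)) ≅ S⁴` -/
def sp1sp1CosetRel (A B : Sp2) : Prop :=
  ∃ q₁ q₂ : ℍ[ℝ], ‖q₁‖ = 1 ∧ ‖q₂‖ = 1 ∧ B.1 = A.1 * Matrix.diagonal ![q₁, q₂]

/-! ### The Hopf map in coordinates and `ℍP¹ ≅ S⁴` -/

/-- The Hopf map in coordinates, `x ↦ (|x₀|² - |x₁|², 2 x₀ x̄₁) ∈ ℝ ⊕ ℍ ≅ ℝ⁵`. These are the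
entries of the traceless part of the quaternionic Hermitian matrix `2 x x*`. -/
def hopfVec (x : QuatPair) : EuclideanSpace ℝ (Fin 5) :=
  !₂[Quaternion.normSq (x 0) - Quaternion.normSq (x 1), 2 * (x 0 * star (x 1)).re,
    2 * (x 0 * star (x 1)).imI, 2 * (x 0 * star (x 1)).imJ, 2 * (x 0 * star (x 1)).imK]

lemma quatPair_norm_sq (x : QuatPair) :
    ‖x‖ ^ 2 = Quaternion.normSq (x 0) + Quaternion.normSq (x 1) := by
  rw [PiLp.norm_sq_eq_of_L2, Fin.sum_univ_two, Quaternion.normSq_eq_norm_mul_self,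
    Quaternion.normSq_eq_norm_mul_self, sq, sq]

lemma normSq_of_norm_one {q : ℍ[ℝ]} (hq : ‖q‖ = 1) : Quaternion.normSq q = 1 := by
  rw [Quaternion.normSq_eq_norm_mul_self, hq, one_mul]

lemma norm_one_of_normSq {q : ℍ[ℝ]} (hq : Quaternion.normSq q = 1) : ‖q‖ = 1 := by
  rw [Quaternion.normSq_eq_norm_mul_self] at hq
  nlinarith [norm_nonneg q]

lemma self_mul_star_of_norm {q : ℍ[ℝ]} (hq : ‖q‖ = 1) : q * star q = 1 := by
  rw [Quaternion.self_mul_star, normSq_of_norm_one hq, Quaternion.coe_one]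

lemma star_mul_self_of_norm {q : ℍ[ℝ]} (hq : ‖q‖ = 1) : star q * q = 1 := by
  rw [Quaternion.star_mul_self, normSq_of_norm_one hq, Quaternion.coe_one]

lemma quatSphere_normSq (x : QuatSphere) :
    Quaternion.normSq (x.1 0) + Quaternion.normSq (x.1 1) = 1 := by
  rw [← quatPair_norm_sq, mem_sphere_zero_iff_norm.mp x.2, one_pow]

lemma hopfVec_norm_sq (x : QuatPair) : ‖hopfVec x‖ ^ 2 = (‖x‖ ^ 2) ^ 2 := by
  rw [quatPair_norm_sq, EuclideanSpace.norm_sq_eq, Fin.sum_univ_five]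
  simp only [Real.norm_eq_abs, sq_abs]
  simp [hopfVec, Quaternion.normSq_def']
  ring

lemma hopfVec_norm (x : QuatPair) : ‖hopfVec x‖ = ‖x‖ ^ 2 :=
  (pow_left_inj₀ (norm_nonneg _) (by positivity) two_ne_zero).mp (hopfVec_norm_sq x)

lemma hopfVec_ext {x y : QuatPair}
    (h0 : Quaternion.normSq (x 0) - Quaternion.normSq (x 1)
      = Quaternion.normSq (y 0) - Quaternion.normSq (y 1))
    (h1 : x 0 * star (x 1) = y 0 * star (y 1)) : hopfVec x = hopfVec y := by
  simp only [hopfVec, h0, h1]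

lemma hopfVec_inj {x y : QuatPair} (h : hopfVec x = hopfVec y) :
    Quaternion.normSq (x 0) - Quaternion.normSq (x 1)
      = Quaternion.normSq (y 0) - Quaternion.normSq (y 1) ∧
    x 0 * star (x 1) = y 0 * star (y 1) := by
  have H : ∀ i, hopfVec x i = hopfVec y i := fun i => by rw [h]
  refine ⟨by simpa [hopfVec] using H 0, ?_⟩
  have h1 : 2 * (x 0 * star (x 1)).re = 2 * (y 0 * star (y 1)).re := H 1
  have h2 : 2 * (x 0 * star (x 1)).imI = 2 * (y 0 * star (y 1)).imI := H 2
  have h3 : 2 * (x 0 * star (x 1)).imJ = 2 * (y 0 * star (y 1)).imJ := H 3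
  have h4 : 2 * (x 0 * star (x 1)).imK = 2 * (y 0 * star (y 1)).imK := H 4
  ext <;> linarith

lemma normSq_eq_one_of_sameQuatLine {x y : QuatSphere} {c : ℍ[ℝ]}
    (hc : ∀ i, y.1 i = x.1 i * c) : Quaternion.normSq c = 1 := by
  have hy := quatSphere_normSq y
  rw [hc, hc, map_mul, map_mul, ← add_mul, quatSphere_normSq x, one_mul] at hy
  exact hy

lemma hopfVec_mul_right {x y : QuatPair} {c : ℍ[ℝ]} (hc : Quaternion.normSq c = 1)
    (h : ∀ i, y i = x i * c) : hopfVec y = hopfVec x := by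
  apply hopfVec_ext
  · rw [h, h, map_mul, map_mul, hc, mul_one, mul_one]
  · rw [h, h, star_mul, mul_assoc, ← mul_assoc c, Quaternion.self_mul_star, hc,
      Quaternion.coe_one, one_mul]

/-- `hopfVec` separates quaternionic lines: equal values force `y = x · (x₀⁻¹ y₀)`, or
`y = x · (x₁⁻¹ y₁)` when `x₀ = 0`. -/
lemma sameQuatLine_of_hopfVec_eq {x y : QuatSphere} (h : hopfVec x.1 = hopfVec y.1) :
    SameQuatLine x.1 y.1 := by
  obtain ⟨h0, h1⟩ := hopfVec_inj h
  have hx := quatSphere_normSq x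
  have hy := quatSphere_normSq y
  have e0 : Quaternion.normSq (y.1 0) = Quaternion.normSq (x.1 0) := by linarith
  have e1 : Quaternion.normSq (y.1 1) = Quaternion.normSq (x.1 1) := by linarith
  by_cases hz : x.1 0 = 0
  · have hy0 : y.1 0 = 0 := by
      rw [hz, map_zero] at e0; exact Quaternion.normSq_eq_zero.mp e0
    have hx1 : x.1 1 ≠ 0 := by
      intro hh; rw [hz, hh] at hx; simp at hx
    have hy1 : y.1 1 ≠ 0 := by
      rw [← Quaternion.normSq_ne_zero] at hx1 ⊢; rwa [e1]
    refine ⟨(x.1 1)⁻¹ * y.1 1, mul_ne_zero (inv_ne_zero hx1) hy1, fun i => ?_⟩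
    fin_cases i
    · simp [hz, hy0]
    · exact (mul_inv_cancel_left₀ hx1 _).symm
  · have hy0 : y.1 0 ≠ 0 := by
      rw [← Quaternion.normSq_ne_zero, e0]; exact Quaternion.normSq_ne_zero.mpr hz
    refine ⟨(x.1 0)⁻¹ * y.1 0, mul_ne_zero (inv_ne_zero hz) hy0, fun i => ?_⟩
    fin_cases i
    · exact (mul_inv_cancel_left₀ hz _).symm
    · change y.1 1 = x.1 1 * ((x.1 0)⁻¹ * y.1 0)
      have h2 : x.1 1 * star (x.1 0) = y.1 1 * star (y.1 0) := by
        have := congrArg star h1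
        simpa using this
      have hn : Quaternion.normSq (x.1 0) ≠ 0 := Quaternion.normSq_ne_zero.mpr hz
      rw [Quaternion.inv_def, smul_mul_assoc, mul_smul_comm, ← mul_assoc, h2, mul_assoc,
        Quaternion.star_mul_self, e0, Quaternion.mul_coe_eq_smul, smul_smul,
        inv_mul_cancel₀ hn, one_smul]

/-- `hopfVec` maps `S⁷` onto `S⁴`: away from the pole `v₀ = -1`, there is a preimage with `x₀` a
positive real. -/
lemma exists_hopfVec_eq {v : EuclideanSpace ℝ (Fin 5)} (hv : ‖v‖ = 1) :
    ∃ x : QuatSphere, hopfVec x.1 = v := by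
  have hv2 : v 0 ^ 2 + v 1 ^ 2 + v 2 ^ 2 + v 3 ^ 2 + v 4 ^ 2 = 1 := by
    have := EuclideanSpace.norm_sq_eq v
    rw [hv, Fin.sum_univ_five] at this
    simpa using this.symm
  suffices H : ∃ x : QuatPair, Quaternion.normSq (x 0) + Quaternion.normSq (x 1) = 1 ∧
      hopfVec x = v by
    obtain ⟨x, hx, hxv⟩ := H
    refine ⟨⟨x, mem_sphere_zero_iff_norm.mpr ?_⟩, hxv⟩
    rw [← quatPair_norm_sq] at hx
    nlinarith [norm_nonneg x]
  by_cases h : v 0 = -1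
  · have hz : v 1 ^ 2 + v 2 ^ 2 + v 3 ^ 2 + v 4 ^ 2 = 0 := by rw [h] at hv2; linarith
    have a1 : v 1 = 0 := by nlinarith [sq_nonneg (v 1), sq_nonneg (v 2), sq_nonneg (v 3), sq_nonneg (v 4)]
    have a2 : v 2 = 0 := by nlinarith [sq_nonneg (v 1), sq_nonneg (v 2), sq_nonneg (v 3), sq_nonneg (v 4)]
    have a3 : v 3 = 0 := by nlinarith [sq_nonneg (v 1), sq_nonneg (v 2), sq_nonneg (v 3), sq_nonneg (v 4)]
    have a4 : v 4 = 0 := by nlinarith [sq_nonneg (v 1), sq_nonneg (v 2), sq_nonneg (v 3), sq_nonneg (v 4)]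
    refine ⟨WithLp.toLp 2 ![0, 1], by simp, ?_⟩
    ext i
    fin_cases i <;> simp [hopfVec, h, a1, a2, a3, a4]
  · have hpos : 0 < (1 + v 0) / 2 := by
      have : v 0 ^ 2 ≤ 1 := by
        nlinarith [sq_nonneg (v 1), sq_nonneg (v 2), sq_nonneg (v 3), sq_nonneg (v 4)]
      have h' : -1 ≤ v 0 := by nlinarith
      have := lt_of_le_of_ne h' (Ne.symm h)
      linarith
    set s := Real.sqrt ((1 + v 0) / 2) with hs
    have hs0 : s ≠ 0 := (Real.sqrt_pos.mpr hpos).ne'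
    have hs2 : s ^ 2 = (1 + v 0) / 2 := Real.sq_sqrt hpos.le
    obtain ⟨w, w1, w2, w3, w4⟩ : ∃ w : ℍ[ℝ], w.re = v 1 / (2 * s) ∧ w.imI = -v 2 / (2 * s) ∧
        w.imJ = -v 3 / (2 * s) ∧ w.imK = -v 4 / (2 * s) := ⟨⟨_, _, _, _⟩, rfl, rfl, rfl, rfl⟩
    have hw : Quaternion.normSq w = (1 - v 0) / 2 := by
      have : Quaternion.normSq w * (4 * s ^ 2) = (1 - v 0) / 2 * (4 * s ^ 2) := by
        have e : Quaternion.normSq w * (4 * s ^ 2)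
            = v 1 ^ 2 + v 2 ^ 2 + v 3 ^ 2 + v 4 ^ 2 := by
          rw [Quaternion.normSq_def', w1, w2, w3, w4]; field_simp; ring
        rw [e, hs2]; linarith
      exact mul_right_cancel₀ (by positivity) this
    have hsn : Quaternion.normSq (s : ℍ[ℝ]) = (1 + v 0) / 2 := by
      rw [Quaternion.normSq_coe, hs2]
    refine ⟨WithLp.toLp 2 ![(s : ℍ[ℝ]), w], ?_, ?_⟩
    · simp only [Matrix.cons_val_zero, Matrix.cons_val_one, hw, hsn]
      ring
    · ext i
      fin_cases i
      · simp [hopfVec, hw, hsn]; ring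
      all_goals
        simp [hopfVec, w1, w2, w3, w4]
        field_simp

lemma continuous_hopfVec : Continuous hopfVec := by
  have hc : ∀ i : Fin 2, Continuous fun x : QuatPair => x i := fun i => by fun_prop
  have h2 : Continuous fun x : QuatPair => x 0 * star (x 1) := (hc 0).mul (hc 1).star
  refine (PiLp.continuous_toLp 2 _).comp (continuous_pi fun i => ?_)
  fin_cases i
  · exact (Quaternion.continuous_normSq.comp (hc 0)).sub (Quaternion.continuous_normSq.comp (hc 1))
  · exact continuous_const.mul (Quaternion.continuous_re.comp h2)
  · exact continuous_const.mul (Quaternion.continuous_imI.comp h2)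
  · exact continuous_const.mul (Quaternion.continuous_imJ.comp h2)
  · exact continuous_const.mul (Quaternion.continuous_imK.comp h2)

/-- `hopfVec` as a map `S⁷ → S⁴`. -/
def hopfSphere (x : QuatSphere) : Metric.sphere (0 : EuclideanSpace ℝ (Fin 5)) 1 :=
  ⟨hopfVec x.1, by
    rw [mem_sphere_zero_iff_norm, hopfVec_norm, mem_sphere_zero_iff_norm.mp x.2, one_pow]⟩

lemma continuous_hopfSphere : Continuous hopfSphere :=
  (continuous_hopfVec.comp continuous_subtype_val).subtype_mk _

lemma hopfSphere_eq_of_sameQuatLine (x y : QuatSphere) (h : SameQuatLine x.1 y.1) :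
    hopfSphere x = hopfSphere y := by
  obtain ⟨c, -, hc⟩ := h
  exact Subtype.ext (hopfVec_mul_right (normSq_eq_one_of_sameQuatLine hc) hc).symm

/-- The identification `ℍP¹ ≅ S⁴` induced by `hopfVec`: a continuous bijection from a compact space
to a Hausdorff one. -/
def projLineHomeo :
    QuatProjLine ≃ₜ ↥(Metric.sphere (0 : EuclideanSpace ℝ (Fin 5)) 1) :=
  Continuous.homeoOfEquivCompactToT2
    (f := Equiv.ofBijective (Quot.lift hopfSphere hopfSphere_eq_of_sameQuatLine) (by
      constructor
      · rintro ⟨x⟩ ⟨y⟩ h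
        exact Quot.sound (sameQuatLine_of_hopfVec_eq (congrArg Subtype.val h))
      · rintro ⟨v, hv⟩
        obtain ⟨x, hx⟩ := exists_hopfVec_eq (mem_sphere_zero_iff_norm.mp hv)
        exact ⟨Quot.mk _ x, Subtype.ext hx⟩))
    (continuous_quot_lift _ continuous_hopfSphere)

lemma projLineHomeo_quatHopf (x : QuatSphere) :
    (projLineHomeo (quatHopf x) : EuclideanSpace ℝ (Fin 5)) = hopfVec x.1 := rfl

/-! ### The action of `Sp(2)` on `S⁴` through `SO(5)` -/

/-- The left action `x ↦ A·x` of quaternionic `2×2`-matrices on `ℍ²`. -/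
def matAct (A : Matrix (Fin 2) (Fin 2) ℍ[ℝ]) (x : QuatPair) : QuatPair :=
  WithLp.toLp 2 fun i => ∑ j, A i j * x j

lemma matAct_apply (A : Matrix (Fin 2) (Fin 2) ℍ[ℝ]) (x : QuatPair) (i : Fin 2) :
    matAct A x i = A i 0 * x 0 + A i 1 * x 1 := by
  simp [matAct, Fin.sum_univ_two]

lemma matAct_mul (A B : Matrix (Fin 2) (Fin 2) ℍ[ℝ]) (x : QuatPair) :
    matAct (A * B) x = matAct A (matAct B x) := by
  ext1 i
  simp only [matAct_apply, Matrix.mul_apply, Fin.sum_univ_two]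
  noncomm_ring

/-- Euclidean 5-space. -/
abbrev E5 : Type := EuclideanSpace ℝ (Fin 5)

/-- The matrix `A` acts on `ℝ⁵` (through `hopfVec`) by a linear isometry of determinant one. -/
def RotatesS4 (A : Matrix (Fin 2) (Fin 2) ℍ[ℝ]) : Prop :=
  ∃ ρ : E5 ≃ₗᵢ[ℝ] E5, ρ.toLinearEquiv.det = 1 ∧ ∀ x, hopfVec (matAct A x) = ρ (hopfVec x)

lemma RotatesS4.mul {A B : Matrix (Fin 2) (Fin 2) ℍ[ℝ]} (hA : RotatesS4 A) (hB : RotatesS4 B) :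
    RotatesS4 (A * B) := by
  obtain ⟨ρ, h1, h2⟩ := hA
  obtain ⟨τ, h3, h4⟩ := hB
  refine ⟨τ.trans ρ, ?_, fun x => ?_⟩
  · have : (τ.trans ρ).toLinearEquiv = ρ.toLinearEquiv * τ.toLinearEquiv := rfl
    rw [this, map_mul, h1, h3, one_mul]
  · rw [matAct_mul, h2, h4]; rfl

/-- If `B` preserves the norm of `ℍ²` and acts linearly on `ℝ⁵`, the action is isometric because
`hopfVec` maps onto the sphere. Its determinant is then `±1`, so `B²` acts with determinant one. -/
lemma rotatesS4_of_sq {B : Matrix (Fin 2) (Fin 2) ℍ[ℝ]} (L : E5 →ₗ[ℝ] E5)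
    (hB : ∀ x, ‖matAct B x‖ = ‖x‖) (hL : ∀ x, hopfVec (matAct B x) = L (hopfVec x)) :
    RotatesS4 (B * B) := by
  have hn : ∀ v, ‖L v‖ = ‖v‖ := by
    intro v
    by_cases hv : v = 0
    · simp [hv]
    · have hv' : ‖v‖ ≠ 0 := norm_ne_zero_iff.mpr hv
      obtain ⟨x, hx⟩ := exists_hopfVec_eq (v := ‖v‖⁻¹ • v) (by
        rw [norm_smul, norm_inv, norm_norm, inv_mul_cancel₀ hv'])
      have h1 : ‖L (‖v‖⁻¹ • v)‖ = 1 := by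
        rw [← hx, ← hL, hopfVec_norm, hB, mem_sphere_zero_iff_norm.mp x.2, one_pow]
      rw [map_smul, norm_smul, norm_inv, norm_norm] at h1
      field_simp at h1
      exact h1
  let ρ : E5 ≃ₗᵢ[ℝ] E5 := LinearIsometry.toLinearIsometryEquiv ⟨L, hn⟩ rfl
  have hρ : ∀ v, ρ v = L v := fun v => rfl
  refine ⟨ρ.trans ρ, ?_, fun x => ?_⟩
  · have h2 : (ρ.trans ρ).toLinearEquiv = ρ.toLinearEquiv * ρ.toLinearEquiv := rfl
    rw [h2, map_mul]
    ext
    have h3 : |LinearMap.det L| = 1 := by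
      rw [← LinearMap.normDet_eq_abs_det]
      exact LinearIsometry.normDet_eq_one ⟨L, hn⟩
    have h4 : ((LinearEquiv.det ρ.toLinearEquiv : ℝˣ) : ℝ) = LinearMap.det L := by
      rw [LinearEquiv.coe_det]; rfl
    rw [Units.val_mul, h4, ← abs_mul_abs_self, h3, one_mul, Units.val_one]
  · rw [matAct_mul, hL, hL]; rfl

/-- The quaternion with given coordinates. The wrapper keeps the type `ℍ[ℝ]`, which the anonymous
constructor would unfold to a general quaternion algebra. -/
def quatMk (a b c d : ℝ) : ℍ[ℝ] := ⟨a, b, c, d⟩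

@[simp] lemma quatMk_re (a b c d : ℝ) : (quatMk a b c d).re = a := rfl
@[simp] lemma quatMk_imI (a b c d : ℝ) : (quatMk a b c d).imI = b := rfl
@[simp] lemma quatMk_imJ (a b c d : ℝ) : (quatMk a b c d).imJ = c := rfl
@[simp] lemma quatMk_imK (a b c d : ℝ) : (quatMk a b c d).imK = d := rfl

/-- The map `(t, h) ↦ (t, p h q̄)` of `ℝ ⊕ ℍ ≅ ℝ⁵` induced by `diag(p, q)` for unit `p`, `q`. -/
def diagLift (p q : ℍ[ℝ]) : E5 →ₗ[ℝ] E5 where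
  toFun v :=
    let h : ℍ[ℝ] := p * quatMk (v 1) (v 2) (v 3) (v 4) * star q
    !₂[v 0, h.re, h.imI, h.imJ, h.imK]
  map_add' v w := by
    ext i; fin_cases i <;> simp <;> ring
  map_smul' r v := by
    ext i; fin_cases i <;> simp <;> ring

/-- The real matrix with rows `(c, -s)` and `(s, c)`, a rotation when `c² + s² = 1`. -/
def rotMat (c s : ℝ) : Matrix (Fin 2) (Fin 2) ℍ[ℝ] := !![(c : ℍ[ℝ]), -s; s, c]

/-- The map of `ℝ⁵` induced by `rotMat c s` when `c² + s² = 1`: a rotation by the double angle in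
the plane of the first two coordinates. -/
def rotLift (c s : ℝ) : E5 →ₗ[ℝ] E5 where
  toFun v :=
    !₂[(c ^ 2 - s ^ 2) * v 0 - 2 * c * s * v 1, 2 * c * s * v 0 + (c ^ 2 - s ^ 2) * v 1,
      v 2, v 3, v 4]
  map_add' v w := by
    ext i; fin_cases i <;> simp <;> ring
  map_smul' r v := by
    ext i; fin_cases i <;> simp <;> ring

lemma diag_mul_diag (p q r s : ℍ[ℝ]) :
    Matrix.diagonal ![p, q] * Matrix.diagonal ![r, s] = Matrix.diagonal ![p * r, q * s] := by
  rw [Matrix.diagonal_mul_diagonal]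
  congr 1
  ext i : 1
  fin_cases i <;> rfl

/-- Every unit quaternion is the square of one: `(1 + p) / |1 + p|` squares to `p` when
`p ≠ -1`, and `i² = -1`. -/
lemma exists_unit_sqrt {p : ℍ[ℝ]} (hp : ‖p‖ = 1) : ∃ r : ℍ[ℝ], ‖r‖ = 1 ∧ r * r = p := by
  by_cases h : 1 + p = 0
  · refine ⟨quatMk 0 1 0 0, norm_one_of_normSq (by simp [Quaternion.normSq_def']), ?_⟩
    rw [← neg_eq_of_add_eq_zero_right h]
    ext <;> simp
  · have hn : ‖1 + p‖ ≠ 0 := norm_ne_zero_iff.mpr h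
    refine ⟨‖1 + p‖⁻¹ • (1 + p), by rw [norm_smul, norm_inv, norm_norm, inv_mul_cancel₀ hn], ?_⟩
    have h1 : (1 + p) * (1 + p) = (‖1 + p‖ * ‖1 + p‖) • p := by
      rw [← Quaternion.normSq_eq_norm_mul_self, ← Quaternion.mul_coe_eq_smul,
        ← Quaternion.star_mul_self, star_add, star_one]
      have := self_mul_star_of_norm hp
      have h2 : p * ((1 + star p) * (1 + p)) = (p + p * star p) * (1 + p) := by noncomm_ring
      rw [h2, this, add_comm]
    rw [smul_mul_smul_comm, h1, smul_smul]
    field_simp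
    simp

lemma matAct_diag_apply (p q : ℍ[ℝ]) (x : QuatPair) :
    matAct (Matrix.diagonal ![p, q]) x 0 = p * x 0 ∧
    matAct (Matrix.diagonal ![p, q]) x 1 = q * x 1 := by
  constructor <;> simp [matAct_apply]

lemma rotatesS4_diag {p q : ℍ[ℝ]} (hp : ‖p‖ = 1) (hq : ‖q‖ = 1) :
    RotatesS4 (Matrix.diagonal ![p, q]) := by
  obtain ⟨a, ha, rfl⟩ := exists_unit_sqrt hp
  obtain ⟨b, hb, rfl⟩ := exists_unit_sqrt hq
  rw [← diag_mul_diag]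
  have hA := normSq_of_norm_one ha
  have hB := normSq_of_norm_one hb
  refine rotatesS4_of_sq (diagLift a b) (fun x => ?_) (fun x => ?_)
  · rw [← pow_left_inj₀ (norm_nonneg _) (norm_nonneg _) two_ne_zero, quatPair_norm_sq,
      quatPair_norm_sq, (matAct_diag_apply a b x).1, (matAct_diag_apply a b x).2, map_mul,
      map_mul, hA, hB, one_mul, one_mul]
  · obtain ⟨h0, h1⟩ := matAct_diag_apply a b x
    have key : a * x 0 * star (b * x 1) = a * (x 0 * star (x 1)) * star b := by
      rw [star_mul]; noncomm_ring
    have key2 : quatMk (hopfVec x 1) (hopfVec x 2) (hopfVec x 3) (hopfVec x 4)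
        = (2 : ℝ) • (x 0 * star (x 1)) := by
      ext <;> simp [hopfVec]
    have key3 : diagLift a b (hopfVec x) = !₂[hopfVec x 0,
        (a * ((2 : ℝ) • (x 0 * star (x 1))) * star b).re,
        (a * ((2 : ℝ) • (x 0 * star (x 1))) * star b).imI,
        (a * ((2 : ℝ) • (x 0 * star (x 1))) * star b).imJ,
        (a * ((2 : ℝ) • (x 0 * star (x 1))) * star b).imK] := by
      rw [← key2]; rfl
    rw [key3, mul_smul_comm, smul_mul_assoc, ← key]
    simp [hopfVec, h0, h1, hA, hB, -star_mul, -Quaternion.re_mul, -Quaternion.imI_mul,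
      -Quaternion.imJ_mul, -Quaternion.imK_mul]

lemma matAct_rot_apply (c s : ℝ) (x : QuatPair) :
    matAct (rotMat c s) x 0 = c • x 0 - s • x 1 ∧ matAct (rotMat c s) x 1 = s • x 0 + c • x 1 := by
  constructor <;> simp [matAct_apply, rotMat, Quaternion.coe_mul_eq_smul, sub_eq_add_neg]

lemma rotatesS4_rot {c s : ℝ} (h : c ^ 2 + s ^ 2 = 1) : RotatesS4 (rotMat c s) := by
  -- The half angle, obtained as a complex square root of `c + i s`.
  obtain ⟨a, b, hab, rfl, rfl⟩ : ∃ a b : ℝ, a ^ 2 + b ^ 2 = 1 ∧ a ^ 2 - b ^ 2 = c ∧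
      2 * a * b = s := by
    obtain ⟨w, hw⟩ := IsAlgClosed.exists_pow_nat_eq (⟨c, s⟩ : ℂ) (n := 2) two_pos
    have h1 := congrArg Complex.re hw
    have h2 := congrArg Complex.im hw
    simp only [sq, Complex.mul_re, Complex.mul_im] at h1 h2
    refine ⟨w.re, w.im, ?_, by linarith, by linarith⟩
    have h3 : (w.re ^ 2 + w.im ^ 2) ^ 2 = 1 := by rw [← h, ← h1, ← h2]; ring
    nlinarith [sq_nonneg w.re, sq_nonneg w.im]
  have hsq : rotMat (a ^ 2 - b ^ 2) (2 * a * b) = rotMat a b * rotMat a b := by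
    apply Matrix.ext
    intro i j
    fin_cases i <;> fin_cases j <;>
      simp [rotMat, Matrix.mul_apply, Fin.sum_univ_two] <;> ext <;> simp [sq] <;> ring
  rw [hsq]
  refine rotatesS4_of_sq (rotLift a b) (fun x => ?_) (fun x => ?_)
  · obtain ⟨h0, h1⟩ := matAct_rot_apply a b x
    rw [← pow_left_inj₀ (norm_nonneg _) (norm_nonneg _) two_ne_zero, quatPair_norm_sq,
      quatPair_norm_sq, h0, h1]
    simp only [Quaternion.normSq_def']
    simp
    linear_combination ((x 0).re ^ 2 + (x 0).imI ^ 2 + (x 0).imJ ^ 2 + (x 0).imK ^ 2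
      + (x 1).re ^ 2 + (x 1).imI ^ 2 + (x 1).imJ ^ 2 + (x 1).imK ^ 2) * hab
  · obtain ⟨h0, h1⟩ := matAct_rot_apply a b x
    ext i
    fin_cases i <;> simp [hopfVec, rotLift, h0, h1, Quaternion.normSq_def']
    · ring
    · ring
    · linear_combination (-((x 0).re * (x 1).imI) + (x 0).imI * (x 1).re
        - (x 0).imJ * (x 1).imK + (x 0).imK * (x 1).imJ) * hab
    · linear_combination (-((x 0).re * (x 1).imJ) + (x 0).imI * (x 1).imK
        + (x 0).imJ * (x 1).re - (x 0).imK * (x 1).imI) * hab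
    · linear_combination (-((x 0).re * (x 1).imK) - (x 0).imI * (x 1).imJ
        + (x 0).imJ * (x 1).imI + (x 0).imK * (x 1).re) * hab

/-! ### Unitary quaternionic matrices -/

/-- Quaternionic `2×2`-matrices. -/
abbrev HMat : Type := Matrix (Fin 2) (Fin 2) ℍ[ℝ]

lemma unitary_row {A : HMat} (hA : A ∈ unitary HMat) (i j : Fin 2) :
    A i 0 * star (A j 0) + A i 1 * star (A j 1) = (1 : HMat) i j := by
  rw [← (Unitary.mem_iff.mp hA).2]
  simp [Matrix.mul_apply, Fin.sum_univ_two, Matrix.star_apply]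

lemma unitary_col {A : HMat} (hA : A ∈ unitary HMat) (i j : Fin 2) :
    star (A 0 i) * A 0 j + star (A 1 i) * A 1 j = (1 : HMat) i j := by
  rw [← (Unitary.mem_iff.mp hA).1]
  simp [Matrix.mul_apply, Fin.sum_univ_two, Matrix.star_apply]

lemma unitary_row_normSq {A : HMat} (hA : A ∈ unitary HMat) (i : Fin 2) :
    Quaternion.normSq (A i 0) + Quaternion.normSq (A i 1) = 1 := by
  have h := unitary_row hA i i
  rw [Quaternion.self_mul_star, Quaternion.self_mul_star, Matrix.one_apply_eq,
    ← Quaternion.coe_add, ← Quaternion.coe_one] at h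
  exact Quaternion.coe_injective h

lemma unitary_col_normSq {A : HMat} (hA : A ∈ unitary HMat) (i : Fin 2) :
    Quaternion.normSq (A 0 i) + Quaternion.normSq (A 1 i) = 1 := by
  have h := unitary_col hA i i
  rw [Quaternion.star_mul_self, Quaternion.star_mul_self, Matrix.one_apply_eq,
    ← Quaternion.coe_add, ← Quaternion.coe_one] at h
  exact Quaternion.coe_injective h

/-- Orthonormal columns suffice for unitarity, since matrix rings over `ℍ` are Dedekind-finite. -/
lemma mem_unitary_of_col {A : HMat}
    (h0 : Quaternion.normSq (A 0 0) + Quaternion.normSq (A 1 0) = 1)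
    (h1 : Quaternion.normSq (A 0 1) + Quaternion.normSq (A 1 1) = 1)
    (h : star (A 1 1) * A 1 0 + star (A 0 1) * A 0 0 = 0) : A ∈ unitary HMat := by
  have H : star A * A = 1 := by
    apply Matrix.ext
    intro i j
    have h' : star (A 0 0) * A 0 1 + star (A 1 0) * A 1 1 = 0 := by
      have := congrArg star h
      rw [star_add, star_mul, star_mul, star_star, star_star, star_zero, add_comm] at this
      exact this
    rw [Matrix.mul_apply, Fin.sum_univ_two, Matrix.star_apply, Matrix.star_apply]
    fin_cases i <;> fin_cases j
    · simp only [Fin.zero_eta, Quaternion.star_mul_self, Matrix.one_apply_eq]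
      rw [← Quaternion.coe_add, h0, Quaternion.coe_one]
    · simpa using h'
    · simpa [add_comm] using h
    · simp only [Fin.mk_one, Quaternion.star_mul_self, Matrix.one_apply_eq]
      rw [← Quaternion.coe_add, h1, Quaternion.coe_one]
  exact Unitary.mem_iff.mpr ⟨H, mul_eq_one_symm H⟩

lemma eq_diagonal_of_offDiag {A : HMat} (h01 : A 0 1 = 0) (h10 : A 1 0 = 0) :
    A = Matrix.diagonal ![A 0 0, A 1 1] := by
  apply Matrix.ext
  intro i j
  fin_cases i <;> fin_cases j <;> simp [h01, h10]

/-- A triangular unitary matrix is diagonal with unit entries. -/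
lemma unitary_diag {A : HMat} (hA : A ∈ unitary HMat) (h : A 0 1 = 0 ∨ A 1 0 = 0) :
    ‖A 0 0‖ = 1 ∧ ‖A 1 1‖ = 1 ∧ A = Matrix.diagonal ![A 0 0, A 1 1] := by
  have r0 := unitary_row_normSq hA 0
  have r1 := unitary_row_normSq hA 1
  have c0 := unitary_col_normSq hA 0
  have c1 := unitary_col_normSq hA 1
  have key : Quaternion.normSq (A 0 1) = 0 ∧ Quaternion.normSq (A 1 0) = 0 := by
    rcases h with h | h
    · have : Quaternion.normSq (A 0 1) = 0 := by rw [h, map_zero]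
      exact ⟨this, by linarith⟩
    · have : Quaternion.normSq (A 1 0) = 0 := by rw [h, map_zero]
      exact ⟨by linarith, this⟩
  exact ⟨norm_one_of_normSq (by linarith), norm_one_of_normSq (by linarith),
    eq_diagonal_of_offDiag (Quaternion.normSq_eq_zero.mp key.1)
      (Quaternion.normSq_eq_zero.mp key.2)⟩

lemma diag_mem_unitary {p q : ℍ[ℝ]} (hp : ‖p‖ = 1) (hq : ‖q‖ = 1) :
    Matrix.diagonal ![p, q] ∈ unitary HMat :=
  mem_unitary_of_col (by simp [normSq_of_norm_one hp]) (by simp [normSq_of_norm_one hq])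
    (by simp)

lemma rotMat_mem_unitary {c s : ℝ} (h : c ^ 2 + s ^ 2 = 1) : rotMat c s ∈ unitary HMat := by
  refine mem_unitary_of_col ?_ ?_ ?_
  · simpa [rotMat, Quaternion.normSq_coe] using h
  · simpa [rotMat, Quaternion.normSq_coe, add_comm] using h
  · simp only [rotMat, Matrix.of_apply, Matrix.cons_val_zero, Matrix.cons_val_one,
      Matrix.cons_val', Matrix.cons_val_fin_one, star_neg, Quaternion.star_coe]
    norm_cast
    ring_nf
    exact Quaternion.coe_zero

lemma exists_polar (a : ℍ[ℝ]) : ∃ p : ℍ[ℝ], ‖p‖ = 1 ∧ p * (‖a‖ : ℍ[ℝ]) = a := by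
  by_cases h : a = 0
  · exact ⟨1, norm_one, by simp [h]⟩
  · have hn : ‖a‖ ≠ 0 := norm_ne_zero_iff.mpr h
    refine ⟨‖a‖⁻¹ • a, by rw [norm_smul, norm_inv, norm_norm, inv_mul_cancel₀ hn], ?_⟩
    rw [Quaternion.mul_coe_eq_smul, smul_smul, mul_inv_cancel₀ hn, one_smul]

/-- Every element of `Sp(2)` is a product of a diagonal matrix, a real rotation and a diagonal
matrix: the first two factors are chosen to reproduce the first column of `A`, which leaves a
triangular unitary matrix. -/
lemma exists_decomp {A : HMat} (hA : A ∈ unitary HMat) :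
    ∃ p q r s : ℍ[ℝ], ∃ c t : ℝ, ‖p‖ = 1 ∧ ‖q‖ = 1 ∧ ‖r‖ = 1 ∧ ‖s‖ = 1 ∧ c ^ 2 + t ^ 2 = 1 ∧
      A = Matrix.diagonal ![p, q] * rotMat c t * Matrix.diagonal ![r, s] := by
  obtain ⟨p, hp, hpa⟩ := exists_polar (A 0 0)
  obtain ⟨q, hq, hqa⟩ := exists_polar (A 1 0)
  set c := ‖A 0 0‖
  set t := ‖A 1 0‖
  have hct : c ^ 2 + t ^ 2 = 1 := by
    have := unitary_col_normSq hA 0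
    rwa [Quaternion.normSq_eq_norm_mul_self, Quaternion.normSq_eq_norm_mul_self, ← sq, ← sq]
      at this
  set U : HMat := Matrix.diagonal ![p, q] * rotMat c t
  have hU : U ∈ unitary HMat := mul_mem (diag_mem_unitary hp hq) (rotMat_mem_unitary hct)
  have hB : star U * A ∈ unitary HMat := mul_mem (Unitary.star_mem hU) hA
  have hU00 : U 0 0 = A 0 0 := by simp [U, rotMat, Matrix.mul_apply, Fin.sum_univ_two, hpa]
  have hU10 : U 1 0 = A 1 0 := by simp [U, rotMat, Matrix.mul_apply, Fin.sum_univ_two, hqa]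
  have h10 : (star U * A) 1 0 = 0 := by
    rw [Matrix.mul_apply, Fin.sum_univ_two, Matrix.star_apply, Matrix.star_apply,
      ← hU00, ← hU10, unitary_col hU]
    simp
  obtain ⟨hr, hs, hd⟩ := unitary_diag hB (Or.inr h10)
  refine ⟨p, q, _, _, c, t, hp, hq, hr, hs, hct, ?_⟩
  rw [← hd, ← mul_assoc, (Unitary.mem_iff.mp hU).2, one_mul]

lemma rotatesS4_of_unitary {A : HMat} (hA : A ∈ unitary HMat) : RotatesS4 A := by
  obtain ⟨p, q, r, s, c, t, hp, hq, hr, hs, hct, rfl⟩ := exists_decomp hA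
  exact ((rotatesS4_diag hp hq).mul (rotatesS4_rot hct)).mul (rotatesS4_diag hr hs)

/-! ### Isometries preserving quaternionic lines -/

/-- Every `ℝ`-algebra endomorphism `σ` of `ℍ` is conjugation by a unit quaternion. The averages
`T a = ∑ σ(b) a b̄` over `b ∈ {1, i, j, k}` satisfy `σ(c) T(a) = T(a) c`, and they cannot all
vanish because `∑ T(a) ā = 4` over the same basis. -/
lemma exists_conj_of_mul {σ : ℍ[ℝ] →ₗ[ℝ] ℍ[ℝ]} (h1 : σ 1 = 1)
    (hmul : ∀ a b, σ (a * b) = σ a * σ b) :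
    ∃ q : ℍ[ℝ], ‖q‖ = 1 ∧ ∀ c, σ c = q * c * star q := by
  set i : ℍ[ℝ] := quatMk 0 1 0 0 with hi
  set j : ℍ[ℝ] := quatMk 0 0 1 0 with hj
  set k : ℍ[ℝ] := quatMk 0 0 0 1 with hk
  have ii : i * i = -1 := by ext <;> simp [hi]
  have jj : j * j = -1 := by ext <;> simp [hj]
  have kk : k * k = -1 := by ext <;> simp [hk]
  have ij : i * j = k := by ext <;> simp [hi, hj, hk]
  have ji : j * i = -k := by ext <;> simp [hi, hj, hk]
  have jk : j * k = i := by ext <;> simp [hi, hj, hk]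
  have kj : k * j = -i := by ext <;> simp [hi, hj, hk]
  have ki : k * i = j := by ext <;> simp [hi, hj, hk]
  have ik : i * k = -j := by ext <;> simp [hi, hj, hk]
  have mII : σ i * σ i = -1 := by rw [← hmul, ii, map_neg, h1]
  have mJJ : σ j * σ j = -1 := by rw [← hmul, jj, map_neg, h1]
  have mIJ : σ i * σ j = σ k := by rw [← hmul, ij]
  have mJI : σ j * σ i = -σ k := by rw [← hmul, ji, map_neg]
  have mJK : σ j * σ k = σ i := by rw [← hmul, jk]
  have mIK : σ i * σ k = -σ j := by rw [← hmul, ik, map_neg]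
  set T : ℍ[ℝ] → ℍ[ℝ] := fun a => a - σ i * a * i - σ j * a * j - σ k * a * k with hT
  have TI : ∀ a, σ i * T a = T a * i := by
    intro a
    have e1 : σ i * T a = σ i * a - (σ i * σ i) * a * i - (σ i * σ j) * a * j
        - (σ i * σ k) * a * k := by simp only [hT]; noncomm_ring
    have e2 : T a * i = a * i - σ i * a * (i * i) - σ j * a * (j * i) - σ k * a * (k * i) := by
      simp only [hT]; noncomm_ring
    rw [e1, e2, mII, mIJ, mIK, ii, ji, ki]; noncomm_ring
  have TJ : ∀ a, σ j * T a = T a * j := by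
    intro a
    have e1 : σ j * T a = σ j * a - (σ j * σ i) * a * i - (σ j * σ j) * a * j
        - (σ j * σ k) * a * k := by simp only [hT]; noncomm_ring
    have e2 : T a * j = a * j - σ i * a * (i * j) - σ j * a * (j * j) - σ k * a * (k * j) := by
      simp only [hT]; noncomm_ring
    rw [e1, e2, mJJ, mJI, mJK, ij, jj, kj]; noncomm_ring
  have TK : ∀ a, σ k * T a = T a * k := by
    intro a
    rw [← mIJ, mul_assoc, TJ, ← mul_assoc, TI, mul_assoc, ij]
  have Tc : ∀ a c, σ c * T a = T a * c := by
    intro a c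
    have hc : c = c.re • (1 : ℍ[ℝ]) + c.imI • i + c.imJ • j + c.imK • k := by
      ext <;> simp [hi, hj, hk]
    rw [hc]
    simp only [map_add, map_smul, add_mul, mul_add, smul_mul_assoc, mul_smul_comm, h1, TI, TJ, TK,
      one_mul, mul_one]
  obtain ⟨a, ha⟩ : ∃ a, T a ≠ 0 := by
    by_contra! hz
    have h4 : T 1 - T i * i - T j * j - T k * k = (4 : ℝ) • (1 : ℍ[ℝ]) := by
      have e : T 1 - T i * i - T j * j - T k * k =
          1 - i * i - j * j - k * k
          + σ i * (-i + i * i * i + j * (i * j) + k * (i * k))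
          + σ j * (-j + i * (j * i) + j * j * j + k * (j * k))
          + σ k * (-k + i * (k * i) + j * (k * j) + k * k * k) := by
        simp only [hT]; noncomm_ring
      have z1 : -i + i * i * i + j * (i * j) + k * (i * k) = 0 := by
        rw [ii, ij, ik, jk, mul_neg, kj]; noncomm_ring
      have z2 : -j + i * (j * i) + j * j * j + k * (j * k) = 0 := by
        rw [ji, jj, jk, ki, mul_neg, ik]; noncomm_ring
      have z3 : -k + i * (k * i) + j * (k * j) + k * k * k = 0 := by
        rw [ki, kj, kk, ij, mul_neg, ji]; noncomm_ring
      rw [e, z1, z2, z3, ii, jj, kk]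
      ext <;> simp
      norm_num
    rw [hz, hz, hz, hz] at h4
    have := congrArg (fun q : ℍ[ℝ] => q.re) h4
    simp at this
  have hn : ‖T a‖ ≠ 0 := norm_ne_zero_iff.mpr ha
  have hq : ‖‖T a‖⁻¹ • T a‖ = 1 := by
    rw [norm_smul, norm_inv, norm_norm, inv_mul_cancel₀ hn]
  refine ⟨‖T a‖⁻¹ • T a, hq, fun c => ?_⟩
  have h2 : σ c * (‖T a‖⁻¹ • T a) = ‖T a‖⁻¹ • T a * c := by
    rw [mul_smul_comm, Tc, smul_mul_assoc]
  rw [← h2, mul_assoc, self_mul_star_of_norm hq, mul_one]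

/-- The element `(a, b)` of `ℍ²`. -/
def pairMk (a b : ℍ[ℝ]) : QuatPair := WithLp.toLp 2 ![a, b]

@[simp] lemma pairMk_zero (a b : ℍ[ℝ]) : pairMk a b 0 = a := rfl
@[simp] lemma pairMk_one (a b : ℍ[ℝ]) : pairMk a b 1 = b := rfl

lemma pairMk_add (a b c d : ℍ[ℝ]) : pairMk a b + pairMk c d = pairMk (a + c) (b + d) := by
  ext1 i; fin_cases i <;> rfl

lemma pairMk_smul (r : ℝ) (a b : ℍ[ℝ]) : r • pairMk a b = pairMk (r • a) (r • b) := by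
  ext1 i; fin_cases i <;> rfl

lemma pairMk_eta (x : QuatPair) : pairMk (x 0) (x 1) = x := by
  ext1 i; fin_cases i <;> rfl

/-- Coordinates with respect to a quaternionic orthonormal frame are unique. -/
lemma frame_unique {u v : QuatPair}
    (hu : Quaternion.normSq (u 0) + Quaternion.normSq (u 1) = 1)
    (hv : Quaternion.normSq (v 0) + Quaternion.normSq (v 1) = 1)
    (huv : star (v 1) * u 1 + star (v 0) * u 0 = 0) {a b a' b' : ℍ[ℝ]}
    (h : ∀ i, u i * a + v i * b = u i * a' + v i * b') : a = a' ∧ b = b' := by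
  have hu' : star (u 0) * u 0 + star (u 1) * u 1 = 1 := by
    rw [Quaternion.star_mul_self, Quaternion.star_mul_self, ← Quaternion.coe_add, hu,
      Quaternion.coe_one]
  have hv' : star (v 0) * v 0 + star (v 1) * v 1 = 1 := by
    rw [Quaternion.star_mul_self, Quaternion.star_mul_self, ← Quaternion.coe_add, hv,
      Quaternion.coe_one]
  have hvu : star (u 1) * v 1 + star (u 0) * v 0 = 0 := by
    have := congrArg star huv
    simpa using this
  have pu : ∀ a b : ℍ[ℝ], star (u 0) * (u 0 * a + v 0 * b) + star (u 1) * (u 1 * a + v 1 * b)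
      = a := by
    intro a b
    have : star (u 0) * (u 0 * a + v 0 * b) + star (u 1) * (u 1 * a + v 1 * b)
      = (star (u 0) * u 0 + star (u 1) * u 1) * a + (star (u 1) * v 1 + star (u 0) * v 0) * b := by
      noncomm_ring
    rw [this, hu', hvu, one_mul, zero_mul, add_zero]
  have pv : ∀ a b : ℍ[ℝ], star (v 0) * (u 0 * a + v 0 * b) + star (v 1) * (u 1 * a + v 1 * b)
      = b := by
    intro a b
    have : star (v 0) * (u 0 * a + v 0 * b) + star (v 1) * (u 1 * a + v 1 * b)
      = (star (v 1) * u 1 + star (v 0) * u 0) * a + (star (v 0) * v 0 + star (v 1) * v 1) * b := by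
      noncomm_ring
    rw [this, hv', huv, one_mul, zero_mul, zero_add]
  exact ⟨by rw [← pu a b, h, h, pu], by rw [← pv a b, h, h, pv]⟩

lemma quat_re_mul_comm (a b : ℍ[ℝ]) : (a * b).re = (b * a).re := by
  simp; ring

/-- A line-preserving isometry is `x ↦ A·x·q̄`. It maps `(1,0)` and `(0,1)` to an orthonormal frame
`u`, `v`, and preservation of the lines through `(1,0)`, `(0,1)`, `(1,1)` and `(1,a)` yields
`g(a,b) = u σ(a) + v σ(b)` with `σ` an algebra endomorphism of `ℍ`, hence a conjugation. -/
lemma exists_matrix_of_lines (g : QuatPair ≃ₗᵢ[ℝ] QuatPair)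
    (H : ∀ x y : QuatPair, SameQuatLine x y → SameQuatLine (g x) (g y)) :
    ∃ (A : HMat) (q : ℍ[ℝ]), A ∈ unitary HMat ∧ ‖q‖ = 1 ∧
      ∀ (x : QuatPair) (i : Fin 2), g x i = (∑ j, A i j * x j) * star q := by
  have line : ∀ a b c : ℍ[ℝ], ∃ c', ∀ i, g (pairMk (a * c) (b * c)) i = g (pairMk a b) i * c' := by
    intro a b c
    by_cases hc : c = 0
    · refine ⟨0, fun i => ?_⟩
      have : pairMk (a * c) (b * c) = 0 := by
        ext1 i; fin_cases i <;> simp [hc, pairMk]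
      rw [this, map_zero, mul_zero]; rfl
    · obtain ⟨c', -, h⟩ := H (pairMk a b) (pairMk (a * c) (b * c))
        ⟨c, hc, fun i => by fin_cases i <;> rfl⟩
      exact ⟨c', h⟩
  set u := g (pairMk 1 0) with hu_def
  set v := g (pairMk 0 1) with hv_def
  have hu : Quaternion.normSq (u 0) + Quaternion.normSq (u 1) = 1 := by
    rw [← quatPair_norm_sq, hu_def, g.norm_map, quatPair_norm_sq]; simp
  have hv : Quaternion.normSq (v 0) + Quaternion.normSq (v 1) = 1 := by
    rw [← quatPair_norm_sq, hv_def, g.norm_map, quatPair_norm_sq]; simp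
  -- The frame coefficient of `g (c, 0)` along `u`, in a form that is visibly linear in `c`.
  let σ : ℍ[ℝ] →ₗ[ℝ] ℍ[ℝ] :=
    { toFun := fun c => star (u 0) * g (pairMk c 0) 0 + star (u 1) * g (pairMk c 0) 1
      map_add' := fun a b => by
        have : pairMk (a + b) 0 = pairMk a 0 + pairMk b 0 := by rw [pairMk_add, add_zero]
        rw [this, map_add, PiLp.add_apply, PiLp.add_apply]
        noncomm_ring
      map_smul' := fun r a => by
        have : pairMk (r • a) 0 = r • pairMk a 0 := by rw [pairMk_smul, smul_zero]
        rw [this, map_smul, PiLp.smul_apply, PiLp.smul_apply, mul_smul_comm, mul_smul_comm,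
          RingHom.id_apply, smul_add] }
  have gσ : ∀ c i, g (pairMk c 0) i = u i * σ c := by
    intro c i
    obtain ⟨c', h⟩ := line 1 0 c
    rw [one_mul, zero_mul] at h
    have : σ c = c' := by
      change star (u 0) * g (pairMk c 0) 0 + star (u 1) * g (pairMk c 0) 1 = c'
      rw [h, h, ← mul_assoc, ← mul_assoc, ← add_mul, Quaternion.star_mul_self,
        Quaternion.star_mul_self, ← Quaternion.coe_add, hu, Quaternion.coe_one, one_mul]
    rw [h, this]
  have σsurj : Function.Surjective σ := by
    rw [← LinearMap.injective_iff_surjective, injective_iff_map_eq_zero]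
    intro c hc
    have h0 : g (pairMk c 0) = 0 := by
      ext1 i; rw [gσ, hc, mul_zero]; rfl
    have h1 : pairMk c 0 = 0 := by simpa using h0
    exact congrArg (fun x : QuatPair => x 0) h1
  have huv : star (v 1) * u 1 + star (v 0) * u 0 = 0 := by
    -- Real orthogonality of `v` to all of `u·ℍ` upgrades to quaternionic orthogonality, by
    -- testing against the vector `u · s̄`.
    set s := star (v 1) * u 1 + star (v 0) * u 0
    obtain ⟨c, hc⟩ := σsurj (star s)
    have h0 : inner ℝ (g (pairMk c 0)) v = 0 := by
      rw [hv_def, g.inner_map_map, PiLp.inner_apply, Fin.sum_univ_two]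
      simp
    rw [PiLp.inner_apply, Fin.sum_univ_two, Quaternion.inner_def, Quaternion.inner_def, gσ c 0,
      gσ c 1, hc, mul_assoc, quat_re_mul_comm (u 0), mul_assoc (u 1), quat_re_mul_comm (u 1),
      ← Quaternion.re_add] at h0
    have h1 : star s * star (v 0) * u 0 + star s * star (v 1) * u 1 = star s * s := by
      simp only [s]; noncomm_ring
    rw [h1, Quaternion.star_mul_self, Quaternion.re_coe] at h0
    exact Quaternion.normSq_eq_zero.mp h0
  have σ1 : σ 1 = 1 := by
    refine (frame_unique hu hv huv (b := 0) (b' := 0) fun i => ?_).1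
    rw [← gσ, mul_one]
  have gsum : ∀ a b i, g (pairMk a b) i = g (pairMk a 0) i + g (pairMk 0 b) i := by
    intro a b i
    rw [← PiLp.add_apply, ← map_add, pairMk_add, add_zero, zero_add]
  have gτ : ∀ c i, g (pairMk 0 c) i = v i * σ c := by
    intro c i
    obtain ⟨t, ht⟩ := line 0 1 c
    obtain ⟨d, hd⟩ := line 1 1 c
    rw [one_mul, zero_mul] at ht
    rw [one_mul] at hd
    have := frame_unique hu hv huv (a := σ c) (b := t) (a' := d) (b' := d) fun i => by
      rw [← gσ, ← ht, ← gsum, hd, gsum, add_mul]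
    rw [ht, this.2, ← this.1]
  have gab : ∀ a b i, g (pairMk a b) i = u i * σ a + v i * σ b := by
    intro a b i
    rw [gsum, gσ, gτ]
  have σmul : ∀ a c, σ (a * c) = σ a * σ c := by
    intro a c
    obtain ⟨d, hd⟩ := line 1 a c
    have := frame_unique hu hv huv (a := σ c) (b := σ (a * c)) (a' := d) (b' := σ a * d)
      fun i => by
        have h := hd i
        rw [gab (1 * c) (a * c) i, gab 1 a i, one_mul, σ1, mul_one, add_mul, mul_assoc] at h
        exact h
    rw [this.2, this.1]
  obtain ⟨q, hq, hσ⟩ := exists_conj_of_mul σ1 σmul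
  refine ⟨!![u 0 * q, v 0 * q; u 1 * q, v 1 * q], q, mem_unitary_of_col ?_ ?_ ?_, hq, ?_⟩
  · simp [map_mul, normSq_of_norm_one hq, hu]
  · simp [map_mul, normSq_of_norm_one hq, hv]
  · have : star (v 1 * q) * (u 1 * q) + star (v 0 * q) * (u 0 * q)
        = star q * (star (v 1) * u 1 + star (v 0) * u 0) * q := by
      rw [star_mul, star_mul]; noncomm_ring
    rw [huv, mul_zero, zero_mul] at this
    exact this
  · intro x i
    rw [← pairMk_eta x, gab, hσ, hσ, Fin.sum_univ_two]
    fin_cases i <;> simp [add_mul, mul_assoc]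

lemma sameQuatLine_of_matrix {g : QuatPair ≃ₗᵢ[ℝ] QuatPair} {A : HMat} {q : ℍ[ℝ]}
    (hq : ‖q‖ = 1) (hg : ∀ (x : QuatPair) (i : Fin 2), g x i = (∑ j, A i j * x j) * star q)
    (x y : QuatPair) (h : SameQuatLine x y) : SameQuatLine (g x) (g y) := by
  obtain ⟨c, hc, hxy⟩ := h
  have hq0 : q ≠ 0 := norm_ne_zero_iff.mp (by rw [hq]; exact one_ne_zero)
  refine ⟨q * c * star q, mul_ne_zero (mul_ne_zero hq0 hc) (star_ne_zero.mpr hq0), fun i => ?_⟩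
  have h1 : (∑ j, A i j * y j) = (∑ j, A i j * x j) * c := by
    rw [Finset.sum_mul]; simp only [hxy, mul_assoc]
  rw [hg, hg, h1]
  have h2 : ∀ z : ℍ[ℝ], z * star q * (q * c * star q) = z * (star q * q) * c * star q :=
    fun z => by noncomm_ring
  rw [h2, star_mul_self_of_norm hq, mul_one]

/-! ### Coset presentation -/

instance compactSpace_Sp2 : CompactSpace Sp2 := by
  have hK : IsCompact (Set.univ.pi fun _ : Fin 2 => Set.univ.pi fun _ : Fin 2 =>
      Metric.closedBall (0 : ℍ[ℝ]) 1) :=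
    isCompact_univ_pi fun _ => isCompact_univ_pi fun _ => isCompact_closedBall _ _
  have hcl : IsClosed (unitary HMat : Set HMat) := isClosed_unitary
  refine isCompact_iff_compactSpace.mp (hK.of_isClosed_subset hcl fun A hA => ?_)
  intro i _ j _
  have h := unitary_row_normSq hA i
  have h0 : Quaternion.normSq (A i j) ≤ 1 := by
    have n0 : 0 ≤ Quaternion.normSq (A i 0) := Quaternion.normSq_nonneg
    have n1 : 0 ≤ Quaternion.normSq (A i 1) := Quaternion.normSq_nonneg
    fin_cases j
    · change Quaternion.normSq (A i 0) ≤ 1; linarith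
    · change Quaternion.normSq (A i 1) ≤ 1; linarith
  rw [mem_closedBall_zero_iff]
  rw [Quaternion.normSq_eq_norm_mul_self] at h0
  nlinarith [norm_nonneg (A i j)]

/-- The orbit map `Sp(2) → S⁷`, `A ↦ A·(0,1)`, that is, the second column of `A`. -/
def secondCol (A : Sp2) : QuatSphere :=
  ⟨WithLp.toLp 2 fun i => A.1 i 1, by
    rw [mem_sphere_zero_iff_norm]
    have h := unitary_col_normSq A.2 1
    have h2 := quatPair_norm_sq (WithLp.toLp 2 fun i => A.1 i 1)
    rw [h] at h2
    exact (pow_eq_one_iff_of_nonneg (norm_nonneg _) two_ne_zero).mp h2⟩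

lemma secondCol_apply (A : Sp2) (i : Fin 2) : (secondCol A).1 i = A.1 i 1 := rfl

lemma continuous_secondCol : Continuous secondCol := by
  refine Continuous.subtype_mk ((PiLp.continuous_toLp 2 _).comp (continuous_pi fun i => ?_)) _
  exact (continuous_apply_apply i 1).comp continuous_subtype_val

lemma secondCol_surjective : Function.Surjective secondCol := by
  intro x
  obtain ⟨p, hp, hpa⟩ := exists_polar (x.1 0)
  obtain ⟨q, hq, hqa⟩ := exists_polar (x.1 1)
  have hct : ‖x.1 1‖ ^ 2 + (-‖x.1 0‖) ^ 2 = 1 := by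
    have := quatSphere_normSq x
    rw [Quaternion.normSq_eq_norm_mul_self, Quaternion.normSq_eq_norm_mul_self] at this
    linarith
  refine ⟨⟨Matrix.diagonal ![p, q] * rotMat ‖x.1 1‖ (-‖x.1 0‖),
    mul_mem (diag_mem_unitary hp hq) (rotMat_mem_unitary hct)⟩, Subtype.ext ?_⟩
  ext1 i
  rw [secondCol_apply]
  fin_cases i <;> simp [rotMat, Matrix.mul_apply, Fin.sum_univ_two, hpa, hqa]

lemma mul_diag_col (A : HMat) (p q : ℍ[ℝ]) (i : Fin 2) :
    (A * Matrix.diagonal ![p, q]) i 1 = A i 1 * q := by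
  simp

/-- Matrices in `Sp(2)` whose second columns agree up to a right scalar `c` differ by a block
diagonal factor: the second column of `A* B` is `(0, c)`. -/
lemma eq_mul_diag_of_col {A B : Sp2} {c : ℍ[ℝ]} (h : ∀ i, B.1 i 1 = A.1 i 1 * c) :
    ∃ q : ℍ[ℝ], ‖q‖ = 1 ∧ ‖c‖ = 1 ∧ B.1 = A.1 * Matrix.diagonal ![q, c] := by
  have hM : star A.1 * B.1 ∈ unitary HMat := mul_mem (Unitary.star_mem A.2) B.2
  have entry : ∀ i, (star A.1 * B.1) i 1 = (1 : HMat) i 1 * c := by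
    intro i
    rw [Matrix.mul_apply, Fin.sum_univ_two, Matrix.star_apply, Matrix.star_apply, h, h,
      ← mul_assoc, ← mul_assoc, ← add_mul, unitary_col A.2]
  have h01 : (star A.1 * B.1) 0 1 = 0 := by rw [entry]; simp
  have h11 : (star A.1 * B.1) 1 1 = c := by rw [entry]; simp
  obtain ⟨h1, h2, h3⟩ := unitary_diag hM (Or.inl h01)
  rw [h11] at h2 h3
  refine ⟨_, h1, h2, ?_⟩
  rw [← h3, ← mul_assoc, (Unitary.mem_iff.mp A.2).2, one_mul]

lemma secondCol_eq_of_rel (A B : Sp2) (h : sp1CosetRel A B) : secondCol A = secondCol B := by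
  obtain ⟨q, -, hB⟩ := h
  refine Subtype.ext ?_
  ext1 i
  rw [secondCol_apply, secondCol_apply, hB, mul_diag_col, mul_one]

lemma quatHopf_secondCol_eq_of_rel (A B : Sp2) (h : sp1sp1CosetRel A B) :
    quatHopf (secondCol A) = quatHopf (secondCol B) := by
  obtain ⟨q₁, q₂, -, h2, hB⟩ := h
  refine Quot.sound ⟨q₂, norm_ne_zero_iff.mp (by rw [h2]; exact one_ne_zero), fun i => ?_⟩
  rw [secondCol_apply, secondCol_apply, hB, mul_diag_col]

instance t2Space_quatProjLine : T2Space QuatProjLine := projLineHomeo.symm.t2Space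

lemma sameQuatLine_of_quatHopf_eq {x y : QuatSphere} (h : quatHopf x = quatHopf y) :
    SameQuatLine x.1 y.1 :=
  sameQuatLine_of_hopfVec_eq (by
    rw [← projLineHomeo_quatHopf, ← projLineHomeo_quatHopf, h])

/-- The homeomorphism `Sp(2)/Sp(1) ≅ S⁷` induced by the second column. -/
def cosetHomeo7 : Quot sp1CosetRel ≃ₜ QuatSphere :=
  Continuous.homeoOfEquivCompactToT2
    (f := Equiv.ofBijective (Quot.lift secondCol secondCol_eq_of_rel) (by
      constructor
      · rintro ⟨A⟩ ⟨B⟩ h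
        have h' : secondCol A = secondCol B := h
        obtain ⟨q, hq, -, hB⟩ := eq_mul_diag_of_col (A := A) (B := B) (c := 1) fun i => by
          rw [← secondCol_apply, ← secondCol_apply, h', mul_one]
        exact Quot.sound ⟨q, hq, hB⟩
      · intro x
        obtain ⟨A, hA⟩ := secondCol_surjective x
        exact ⟨Quot.mk _ A, hA⟩))
    (continuous_quot_lift _ continuous_secondCol)

/-- The homeomorphism `Sp(2)/(Sp(1)×Sp(1)) ≅ ℍP¹` induced by the line of the second column. -/
def cosetHomeo4 : Quot sp1sp1CosetRel ≃ₜ QuatProjLine :=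
  Continuous.homeoOfEquivCompactToT2
    (f := Equiv.ofBijective
      (Quot.lift (fun A => quatHopf (secondCol A)) quatHopf_secondCol_eq_of_rel) (by
      constructor
      · rintro ⟨A⟩ ⟨B⟩ h
        obtain ⟨c, -, hc⟩ := sameQuatLine_of_quatHopf_eq (x := secondCol A) (y := secondCol B) h
        obtain ⟨q, hq, hc1, hB⟩ := eq_mul_diag_of_col (A := A) (B := B) hc
        exact Quot.sound ⟨q, c, hq, hc1, hB⟩
      · rintro ⟨x⟩
        obtain ⟨A, hA⟩ := secondCol_surjective x
        exact ⟨Quot.mk _ A, congrArg quatHopf hA⟩))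
    (continuous_quot_lift _ (continuous_quot_mk.comp continuous_secondCol))

/-- (a) An `ℝ`-linear isometry `g` of `ℍ² ≅ ℝ⁸` is equivariant over the quaternionic Hopf
fibration (preserves quaternionic lines) precisely if it is of the form
`x ↦ A·x·q̄` for some `A ∈ Sp(2)` and unit quaternion `q`; i.e. the maximal subgroup
of `O(8)` under which `h_ℍ` is equivariant is the image of `Sp(2)·Sp(1)`.
(b) The induced action on `S⁴ = ℍP¹` is through `SO(5)`: there is an identification
`ℍP¹ ≅ S(ℝ⁵)` under which every line-preserving isometry acts by a determinant-one
linear isometry of `ℝ⁵` (the image of `Sp(2)·Sp(1) ≅ Spin(5)·Spin(3)` under the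
projection to `SO(5)`).
(c) Coset presentation: there are homeomorphisms `Sp(2)/Sp(1) ≅ S⁷` (induced by acting
on the unit vector `(0,1)`, i.e. `A ↦` second column of `A`) and
`Sp(2)/(Sp(1)×Sp(1)) ≅ S⁴` under which `h_ℍ` is the canonical projection
`Sp(2)/Sp(1) → Sp(2)/(Sp(1)×Sp(1))`. -/
theorem quaternionic_hopf_equivariance_and_coset_presentation :
    -- (a) maximality of Sp(2)·Sp(1) ⊂ O(8) as equivariance group of h_ℍ
    (∀ g : QuatPair ≃ₗᵢ[ℝ] QuatPair,
      (∀ x y : QuatPair, SameQuatLine x y → SameQuatLine (g x) (g y)) ↔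
        ∃ (A : Matrix (Fin 2) (Fin 2) ℍ[ℝ]) (q : ℍ[ℝ]),
          A ∈ unitary (Matrix (Fin 2) (Fin 2) ℍ[ℝ]) ∧ ‖q‖ = 1 ∧
            ∀ (x : QuatPair) (i : Fin 2), g x i = (∑ j, A i j * x j) * star q)
    ∧
    -- (b) the action on S⁴ ≅ S(ℝ⁵) is through SO(5)
    (∃ e : QuatProjLine ≃ₜ ↥(Metric.sphere (0 : EuclideanSpace ℝ (Fin 5)) 1),
      ∀ g : QuatPair ≃ₗᵢ[ℝ] QuatPair,
        (∀ x y : QuatPair, SameQuatLine x y → SameQuatLine (g x) (g y)) →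
          ∃ ρ : EuclideanSpace ℝ (Fin 5) ≃ₗᵢ[ℝ] EuclideanSpace ℝ (Fin 5),
            ρ.toLinearEquiv.det = 1 ∧
              ∀ x : QuatSphere,
                (e (quatHopf (⟨g x.1, by
                    rw [mem_sphere_zero_iff_norm, g.norm_map]
                    exact mem_sphere_zero_iff_norm.mp x.2⟩ : QuatSphere)) :
                  EuclideanSpace ℝ (Fin 5))
                  = ρ ((e (quatHopf x) : EuclideanSpace ℝ (Fin 5))))
    ∧
    -- (c) coset presentation of h_ℍ
    (∃ (e7 : Quot sp1CosetRel ≃ₜ QuatSphere)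
        (e4 : Quot sp1sp1CosetRel ≃ₜ QuatProjLine),
      (∀ (A : Sp2) (i : Fin 2), ((e7 (Quot.mk _ A) : QuatPair)) i = A.1 i 1) ∧
      (∀ A : Sp2, e4 (Quot.mk _ A) = quatHopf (e7 (Quot.mk _ A)))) := by
  refine ⟨fun g => ⟨exists_matrix_of_lines g, ?_⟩, ⟨projLineHomeo, fun g H => ?_⟩,
    ⟨cosetHomeo7, cosetHomeo4, fun A i => rfl, fun A => rfl⟩⟩
  · rintro ⟨A, q, -, hq, hg⟩
    exact sameQuatLine_of_matrix hq hg
  · obtain ⟨A, q, hA, hq, hg⟩ := exists_matrix_of_lines g H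
    obtain ⟨ρ, hρ, h⟩ := rotatesS4_of_unitary hA
    refine ⟨ρ, hρ, fun x => ?_⟩
    rw [projLineHomeo_quatHopf, projLineHomeo_quatHopf, ← h]
    exact hopfVec_mul_right (by rw [Quaternion.normSq_star, normSq_of_norm_one hq])
      fun i => hg x.1 i
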